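/- The tetrablock 𝔼 is not Gromov hyperbolic with respect to its Kobayashi distance k_𝔼. -/

import Mathlib

open Metric Set

noncomputable section

/-- Inverse hyperbolic tangent: `artanh t = (1/2) * log ((1+t)/(1-t))`. -/
def artanh (x : ℝ) : ℝ := Real.log ((1 + x) / (1 - x)) / 2

variable {E : Type*} [NormedAddCommGroup E] [NormedSpace ℂ E]

/-- The Lempert function of a set `D ⊆ E`:
`l_D(z,w) = inf { artanh |α| : ∃ φ : 𝔻 → D holomorphic, φ 0 = z, φ α = w }`. -/
def lempert (D : Set E) (z w : E) : ℝ :=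
  sInf { r : ℝ | ∃ α : ℂ, ‖α‖ < 1 ∧
    (∃ φ : ℂ → E, DifferentiableOn ℂ φ (ball 0 1) ∧ MapsTo φ (ball 0 1) D ∧
      φ 0 = z ∧ φ α = w) ∧ r = artanh ‖α‖ }

/-- The Kobayashi pseudodistance: infimum of `∑ l_D(z_{i-1}, z_i)` over all finite
chains of points `z = c 0, c 1, …, c m = w` in `D`. -/
def kobayashi (D : Set E) (z w : E) : ℝ :=
  sInf { r : ℝ | ∃ (m : ℕ) (c : ℕ → E), c 0 = z ∧ c m = w ∧ (∀ i ≤ m, c i ∈ D) ∧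
    r = ∑ i ∈ Finset.range m, lempert D (c i) (c (i + 1)) }

/-- The Carathéodory pseudodistance:
`c_D(z,w) = sup { artanh |f w| : f : D → 𝔻 holomorphic, f z = 0 }`. -/
def caratheodory (D : Set E) (z w : E) : ℝ :=
  sSup { r : ℝ | ∃ f : E → ℂ, DifferentiableOn ℂ f D ∧ MapsTo f D (ball 0 1) ∧
    f z = 0 ∧ r = artanh ‖f w‖ }

/-- `(D, d)` is Gromov hyperbolic if
`sup_{p,q,x,w ∈ D} ( min{(p,x)_w, (x,q)_w} − (p,q)_w ) < ∞`, where
`(x,y)_z = d x z + d z y - d x y` is the Gromov product. -/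
def GromovHyperbolicWith (D : Set E) (d : E → E → ℝ) : Prop :=
  ∃ C : ℝ, ∀ p ∈ D, ∀ q ∈ D, ∀ x ∈ D, ∀ w ∈ D,
    min (d p w + d w x - d p x) (d x w + d w q - d x q) - (d p w + d w q - d p q) ≤ C

end

/-- The tetrablock `𝔼 ⊆ ℂ³`: the image of the symmetric `2 × 2` matrices of operator
norm `< 1` under `(z₁₁, z₂₂, z) ↦ (z₁₁, z₂₂, z₁₁ z₂₂ − z²)`. -/
def tetrablock : Set (EuclideanSpace ℂ (Fin 3)) :=
  { w | ∃ z₁₁ z₂₂ z : ℂ,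
      ‖Matrix.toEuclideanCLM (𝕜 := ℂ) (Matrix.of ![![z₁₁, z], ![z, z₂₂]])‖ < 1 ∧
      w 0 = z₁₁ ∧ w 1 = z₂₂ ∧ w 2 = z₁₁ * z₂₂ - z ^ 2 }

/-! The map `(a, b) ↦ (a, b, ab)` embeds the bidisc into the tetrablock, and `w ↦ (w₀, w₁)` is a
holomorphic left inverse; since holomorphic maps contract Kobayashi distances, the embedding is an
isometry. In the bidisc the distance is the maximum of the hyperbolic distances of the coordinates,
so that, as in `ℓ^∞`, the points `(r, r)`, `(0, r)`, `(-r, r)`, `(0, 0)` violate the four-point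
condition by an amount that tends to infinity as `r → 1`.

Because `sInf ∅ = 0`, contraction needs the set defining the Lempert function to be nonempty, i.e.
that any two points lie on a common analytic disc. If `x` and `y` have seminorm less than `a² < 1`,
then they lie on the disc `t ↦ ((a - t) / 2a)² x + ((a + t) / 2a)² y`, which stays in the unit ball
of the seminorm because, by the parallelogram identity, the absolute values of the coefficients add
up to `(a² + |t|²) / 2a²`. The tetrablock is a holomorphic image of such a ball. -/

/-! ### Holomorphic maps between domains -/

section HolomorphicMapsTo

variable {E F G : Type*} [NormedAddCommGroup E] [NormedSpace ℂ E] [NormedAddCommGroup F]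
  [NormedSpace ℂ F] [NormedAddCommGroup G] [NormedSpace ℂ G] {D : Set E} {D' : Set F} {D'' : Set G}

/-- `f` is a holomorphic map from `D` into `D'`. The maps from the unit disc `ball 0 1` into `D` are
the analytic discs in `D`. -/
structure HolomorphicMapsTo (D : Set E) (D' : Set F) (f : E → F) : Prop where
  differentiableOn : DifferentiableOn ℂ f D
  mapsTo : MapsTo f D D'

theorem HolomorphicMapsTo.id (D : Set E) : HolomorphicMapsTo D D fun x ↦ x :=
  ⟨differentiableOn_id, mapsTo_id D⟩

theorem HolomorphicMapsTo.const (D : Set E) {c : F} (hc : c ∈ D') :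
    HolomorphicMapsTo D D' fun _ ↦ c :=
  ⟨differentiableOn_const c, fun _ _ ↦ hc⟩

theorem HolomorphicMapsTo.comp {g : F → G} {f : E → F} (hg : HolomorphicMapsTo D' D'' g)
    (hf : HolomorphicMapsTo D D' f) : HolomorphicMapsTo D D'' (g ∘ f) :=
  ⟨hg.differentiableOn.comp hf.differentiableOn hf.mapsTo, hg.mapsTo.comp hf.mapsTo⟩

theorem HolomorphicMapsTo.neg {f : E → F} {r : ℝ} (hf : HolomorphicMapsTo D (ball 0 r) f) :
    HolomorphicMapsTo D (ball 0 r) fun x ↦ -f x :=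
  ⟨hf.differentiableOn.neg, fun x hx ↦ by
    simpa only [mem_ball_zero_iff, norm_neg] using hf.mapsTo hx⟩

theorem HolomorphicMapsTo.prodMk {f : E → F} {g : E → G} (hf : HolomorphicMapsTo D D' f)
    (hg : HolomorphicMapsTo D D'' g) : HolomorphicMapsTo D (D' ×ˢ D'') fun x ↦ (f x, g x) :=
  ⟨hf.differentiableOn.prodMk hg.differentiableOn, fun _ hx ↦ ⟨hf.mapsTo hx, hg.mapsTo hx⟩⟩

theorem HolomorphicMapsTo.fst (D : Set E) (D' : Set F) :
    HolomorphicMapsTo (D ×ˢ D') D Prod.fst :=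
  ⟨differentiableOn_fst, fun _ hx ↦ hx.1⟩

theorem HolomorphicMapsTo.snd (D : Set E) (D' : Set F) :
    HolomorphicMapsTo (D ×ˢ D') D' Prod.snd :=
  ⟨differentiableOn_snd, fun _ hx ↦ hx.2⟩

end HolomorphicMapsTo

/-! ### Gromov hyperbolicity -/

section GromovHyperbolicity

variable {X Y : Type*} {S : Set X} {S' : Set Y}

theorem GromovHyperbolicWith.of_isometry {d : X → X → ℝ} {d' : Y → Y → ℝ}
    (h : GromovHyperbolicWith S' d') {ι : X → Y} (hι : MapsTo ι S S')
    (hd : ∀ z ∈ S, ∀ w ∈ S, d' (ι z) (ι w) = d z w) : GromovHyperbolicWith S d := by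
  obtain ⟨C, hC⟩ := h
  refine ⟨C, fun p hp q hq x hx w hw ↦ ?_⟩
  simpa only [hd _ hp _ hw, hd _ hw _ hx, hd _ hp _ hx, hd _ hx _ hw, hd _ hw _ hq, hd _ hx _ hq,
    hd _ hp _ hq] using hC _ (hι hp) _ (hι hq) _ (hι hx) _ (hι hw)

theorem not_gromovHyperbolicWith_of_squares {d : X → X → ℝ}
    (h : ∀ T > 0, ∃ p ∈ S, ∃ q ∈ S, ∃ x ∈ S, ∃ w ∈ S, d p x ≤ T ∧ d x q ≤ T ∧ d p w ≤ T ∧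
      d w q ≤ T ∧ T ≤ d w x ∧ T ≤ d x w ∧ 2 * T ≤ d p q) : ¬ GromovHyperbolicWith S d := by
  rintro ⟨C, hC⟩
  obtain ⟨p, hp, q, hq, x, hx, w, hw, hpx, hxq, hpw, hwq, hwx, hxw, hpq⟩ :=
    h (|C| + 1) (by positivity)
  have hmin : |C| + 1 + (d p w + d w q - d p q) ≤
      min (d p w + d w x - d p x) (d x w + d w q - d x q) :=
    le_min (by linarith) (by linarith)
  linarith [hC p hp q hq x hx w hw, le_abs_self C]

end GromovHyperbolicity

/-! ### The inverse hyperbolic tangent -/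

theorem artanh_eq_real_artanh {x : ℝ} (hx : x ∈ Icc (-1) 1) : artanh x = Real.artanh x := by
  rw [Real.artanh_eq_half_log hx, artanh]
  ring

theorem artanh_nonneg {x : ℝ} (hx : x ∈ Icc 0 1) : 0 ≤ artanh x := by
  rw [artanh_eq_real_artanh ⟨by linarith [hx.1], hx.2⟩]
  exact Real.artanh_nonneg hx.1

theorem artanh_tanh (x : ℝ) : artanh (Real.tanh x) = x := by
  rw [artanh_eq_real_artanh ⟨(Real.neg_one_lt_tanh x).le, (Real.tanh_lt_one x).le⟩,
    Real.artanh_tanh]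

theorem exists_artanh_eq {x : ℝ} (hx : 0 ≤ x) : ∃ r : ℝ, 0 ≤ r ∧ r < 1 ∧ artanh r = x := by
  refine ⟨Real.tanh x, ?_, Real.tanh_lt_one x, artanh_tanh x⟩
  rw [Real.tanh_eq_sinh_div_cosh]
  exact div_nonneg (Real.sinh_nonneg_iff.mpr hx) (Real.cosh_pos x).le

theorem artanh_zero : artanh 0 = 0 := by
  simp [artanh]

theorem artanh_neg (x : ℝ) : artanh (-x) = -artanh x := by
  have : (1 + -x) / (1 - -x) = ((1 + x) / (1 - x))⁻¹ := by rw [inv_div]; ring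
  rw [artanh, artanh, this, Real.log_inv, neg_div]

/-! ### The unit disc -/

section UnitDisc

open ComplexConjugate

/-- The involutive automorphism of the unit disc that interchanges `0` and `a`. -/
noncomputable def discInvolution (a t : ℂ) : ℂ := (a - t) / (1 - conj a * t)

theorem one_sub_ne_zero_of_norm_lt_one {z : ℂ} (hz : ‖z‖ < 1) : 1 - z ≠ 0 :=
  sub_ne_zero.mpr (by rintro rfl; simp at hz)

theorem one_sub_conj_mul_ne_zero {a t : ℂ} (ha : ‖a‖ < 1) (ht : ‖t‖ < 1) :
    1 - conj a * t ≠ 0 :=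
  one_sub_ne_zero_of_norm_lt_one <| by
    rw [norm_mul, Complex.norm_conj]
    exact mul_lt_one_of_nonneg_of_lt_one_left (norm_nonneg a) ha ht.le

theorem discInvolution_zero (a : ℂ) : discInvolution a 0 = a := by
  simp [discInvolution]

theorem discInvolution_self (a : ℂ) : discInvolution a a = 0 := by
  simp [discInvolution]

theorem discInvolution_discInvolution {a t : ℂ} (ha : ‖a‖ < 1) (ht : ‖t‖ < 1) :
    discInvolution a (discInvolution a t) = t := by
  have hd : 1 - conj a * t ≠ 0 := one_sub_conj_mul_ne_zero ha ht
  have hn : 1 - conj a * a ≠ 0 := one_sub_conj_mul_ne_zero ha ha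
  have hnum : a - discInvolution a t = (1 - conj a * a) * t / (1 - conj a * t) := by
    rw [discInvolution, eq_div_iff hd, sub_mul, div_mul_cancel₀ _ hd]; ring
  have hden : 1 - conj a * discInvolution a t = (1 - conj a * a) / (1 - conj a * t) := by
    rw [discInvolution, eq_div_iff hd, sub_mul, mul_assoc, div_mul_cancel₀ _ hd]; ring
  rw [discInvolution, hnum, hden]
  field_simp

theorem norm_sub_sq_add_one_sub_norm_sq_mul (a t : ℂ) :
    ‖a - t‖ ^ 2 + (1 - ‖a‖ ^ 2) * (1 - ‖t‖ ^ 2) = ‖1 - conj a * t‖ ^ 2 := by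
  simp only [Complex.sq_norm, Complex.normSq_apply, Complex.sub_re, Complex.sub_im, Complex.mul_re,
    Complex.mul_im, Complex.conj_re, Complex.conj_im, Complex.one_re, Complex.one_im]
  ring

theorem norm_discInvolution_lt_one {a t : ℂ} (ha : ‖a‖ < 1) (ht : ‖t‖ < 1) :
    ‖discInvolution a t‖ < 1 := by
  rw [discInvolution, norm_div, div_lt_one (norm_pos_iff.mpr (one_sub_conj_mul_ne_zero ha ht)),
    ← sq_lt_sq₀ (norm_nonneg _) (norm_nonneg _), ← norm_sub_sq_add_one_sub_norm_sq_mul]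
  have hpos : ∀ {z : ℂ}, ‖z‖ < 1 → 0 < 1 - ‖z‖ ^ 2 := fun hz ↦
    sub_pos.mpr (pow_lt_one₀ (norm_nonneg _) hz two_ne_zero)
  exact lt_add_of_pos_right _ (mul_pos (hpos ha) (hpos ht))

theorem holomorphicMapsTo_discInvolution {a : ℂ} (ha : ‖a‖ < 1) :
    HolomorphicMapsTo (ball 0 1) (ball 0 1) (discInvolution a) where
  differentiableOn := DifferentiableOn.div (by fun_prop) (by fun_prop) fun _ ht ↦
    one_sub_conj_mul_ne_zero ha (mem_ball_zero_iff.mp ht)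
  mapsTo _ ht := mem_ball_zero_iff.mpr (norm_discInvolution_lt_one ha (mem_ball_zero_iff.mp ht))

theorem cayley_re_pos {z : ℂ} (hz : ‖z‖ < 1) : 0 < ((1 + z) / (1 - z)).re := by
  have hden : 0 < Complex.normSq (1 - z) :=
    Complex.normSq_pos.mpr (one_sub_ne_zero_of_norm_lt_one hz)
  have hre : ((1 + z) / (1 - z)).re = (1 - ‖z‖ ^ 2) / Complex.normSq (1 - z) := by
    simp only [Complex.div_re, ← add_div, Complex.sq_norm, Complex.normSq_apply, Complex.add_re,
      Complex.sub_re, Complex.add_im, Complex.sub_im, Complex.one_re, Complex.one_im]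
    ring
  rw [hre]
  exact div_pos (sub_pos.mpr (pow_lt_one₀ (norm_nonneg z) hz two_ne_zero)) hden

theorem holomorphicMapsTo_cayley :
    HolomorphicMapsTo (ball 0 1) {z | 0 < z.re} fun z : ℂ ↦ (1 + z) / (1 - z) where
  differentiableOn := DifferentiableOn.div (by fun_prop) (by fun_prop) fun _ hz ↦
    one_sub_ne_zero_of_norm_lt_one (mem_ball_zero_iff.mp hz)
  mapsTo _ hz := cayley_re_pos (mem_ball_zero_iff.mp hz)

theorem half_log_cayley_re_ofReal (r : ℝ) :
    Real.log ((1 + r : ℂ) / (1 - r)).re / 2 = artanh r := by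
  rw [artanh]
  norm_cast

theorem harnack_re_le {g : ℂ → ℂ} {R : ℝ}
    (hg : HolomorphicMapsTo (ball 0 R) {z | 0 < z.re} g) {α : ℂ} (hα : ‖α‖ < R) :
    (g α).re ≤ (R + ‖α‖) / (R - ‖α‖) * (g 0).re := by
  have hR : 0 < R := (norm_nonneg α).trans_lt hα
  have hbound : ‖g 0 - g α‖ ≤ 2 * (g 0).re * ‖α‖ / (R - ‖α‖) :=
    Complex.borelCaratheodory_zero (hg.mapsTo (mem_ball_self hR))
      (hg.differentiableOn.const_sub (g 0))
      (fun t ht ↦ by simpa using (hg.mapsTo ht).le) hR (mem_ball_zero_iff.mpr hα) (sub_self _)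
  have hne : R - ‖α‖ ≠ 0 := (sub_pos.mpr hα).ne'
  calc (g α).re = (g 0).re - (g 0 - g α).re := by simp
    _ ≤ (g 0).re + ‖g 0 - g α‖ := by
      linarith [neg_le_of_abs_le (Complex.abs_re_le_norm (g 0 - g α))]
    _ ≤ (g 0).re + 2 * (g 0).re * ‖α‖ / (R - ‖α‖) := by gcongr
    _ = (R + ‖α‖) / (R - ‖α‖) * (g 0).re := by field_simp; ring

theorem half_log_re_sub_half_log_re_zero_le_artanh {g : ℂ → ℂ}
    (hg : HolomorphicMapsTo (ball 0 1) {z | 0 < z.re} g) {α : ℂ} (hα : ‖α‖ < 1) :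
    Real.log (g α).re / 2 - Real.log (g 0).re / 2 ≤ artanh ‖α‖ := by
  have h₀ : 0 < (g 0).re := hg.mapsTo (mem_ball_self one_pos)
  have h₁ : 0 < (g α).re := hg.mapsTo (mem_ball_zero_iff.mpr hα)
  rw [← sub_div, ← Real.log_div h₁.ne' h₀.ne', artanh]
  have hharnack := (div_le_iff₀ h₀).mpr (harnack_re_le hg hα)
  exact div_le_div_of_nonneg_right (Real.log_le_log (div_pos h₁ h₀) hharnack) zero_le_two

end UnitDisc

section Kobayashi

variable {E F : Type*} [NormedAddCommGroup E] [NormedSpace ℂ E]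
  [NormedAddCommGroup F] [NormedSpace ℂ F] {D : Set E} {D' : Set F}

/-! ### Analytic discs through two points -/

/-- Any two points of `D` lie on a common analytic disc, i.e. the Lempert function of `D` is the
infimum of a nonempty set. -/
def AnalyticDiscConnected (D : Set E) : Prop :=
  ∀ ⦃z⦄, z ∈ D → ∀ ⦃w⦄, w ∈ D → ∃ φ : ℂ → E, HolomorphicMapsTo (ball 0 1) D φ ∧
    z ∈ φ '' ball 0 1 ∧ w ∈ φ '' ball 0 1

theorem AnalyticDiscConnected.exists_disc (hD : AnalyticDiscConnected D) {z w : E} (hz : z ∈ D)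
    (hw : w ∈ D) :
    ∃ α : ℂ, ‖α‖ < 1 ∧ ∃ φ : ℂ → E, HolomorphicMapsTo (ball 0 1) D φ ∧ φ 0 = z ∧ φ α = w := by
  obtain ⟨φ, hφ, ⟨a, ha, rfl⟩, ⟨b, hb, rfl⟩⟩ := hD hz hw
  rw [mem_ball_zero_iff] at ha hb
  refine ⟨discInvolution a b, norm_discInvolution_lt_one ha hb, φ ∘ discInvolution a,
    hφ.comp (holomorphicMapsTo_discInvolution ha), ?_, ?_⟩
  · rw [Function.comp_apply, discInvolution_zero]
  · rw [Function.comp_apply, discInvolution_discInvolution ha hb]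

theorem AnalyticDiscConnected.of_surjOn (hD : AnalyticDiscConnected D) {f : E → F}
    (hf : HolomorphicMapsTo D D' f) (hsurj : SurjOn f D D') : AnalyticDiscConnected D' := by
  intro z' hz' w' hw'
  obtain ⟨z, hz, rfl⟩ := hsurj hz'
  obtain ⟨w, hw, rfl⟩ := hsurj hw'
  obtain ⟨φ, hφ, hzφ, hwφ⟩ := hD hz hw
  refine ⟨f ∘ φ, hf.comp hφ, ?_⟩
  rw [image_comp]
  exact ⟨mem_image_of_mem f hzφ, mem_image_of_mem f hwφ⟩

theorem norm_sub_div_sq_add_norm_add_div_sq (a t : ℂ) :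
    ‖((a - t) / (2 * a)) ^ 2‖ + ‖((a + t) / (2 * a)) ^ 2‖ =
      (‖a‖ ^ 2 + ‖t‖ ^ 2) / (2 * ‖a‖ ^ 2) := by
  have hpar : ‖a + t‖ ^ 2 + ‖a - t‖ ^ 2 = 2 * (‖a‖ ^ 2 + ‖t‖ ^ 2) := by
    simpa only [← sq] using parallelogram_law_with_norm ℝ a t
  calc ‖((a - t) / (2 * a)) ^ 2‖ + ‖((a + t) / (2 * a)) ^ 2‖
      = (‖a + t‖ ^ 2 + ‖a - t‖ ^ 2) / (2 * ‖a‖) ^ 2 := by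
        rw [norm_pow, norm_pow, norm_div, norm_div, norm_mul, Complex.norm_two, div_pow, div_pow,
          add_div, add_comm]
    _ = 2 * (‖a‖ ^ 2 + ‖t‖ ^ 2) / (2 * (2 * ‖a‖ ^ 2)) := by rw [hpar]; ring
    _ = (‖a‖ ^ 2 + ‖t‖ ^ 2) / (2 * ‖a‖ ^ 2) := mul_div_mul_left _ _ two_ne_zero

theorem analyticDiscConnected_seminorm_ball (p : Seminorm ℂ E) :
    AnalyticDiscConnected (p.ball 0 1) := by
  intro x hx y hy
  rw [p.mem_ball_zero] at hx hy
  obtain ⟨a, hρa, ha1⟩ : ∃ a, √(max (p x) (p y)) < a ∧ a < 1 :=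
    exists_between (by rw [Real.sqrt_lt' one_pos, one_pow]; exact max_lt hx hy)
  have ha : 0 < a := (Real.sqrt_nonneg _).trans_lt hρa
  have hρ : max (p x) (p y) < a ^ 2 := (Real.sqrt_lt' ha).mp hρa
  have hnorm : ‖(a : ℂ)‖ = a := Complex.norm_of_nonneg ha.le
  have hmem : (a : ℂ) ∈ ball 0 1 := by rwa [mem_ball_zero_iff, hnorm]
  have hone : (a + a : ℂ) / (2 * a) = 1 := by
    rw [← two_mul, div_self (mul_ne_zero two_ne_zero (Complex.ofReal_ne_zero.mpr ha.ne'))]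
  refine ⟨fun t ↦ ((a - t) / (2 * a)) ^ 2 • x + ((a + t) / (2 * a)) ^ 2 • y,
    ⟨by fun_prop, fun t ht ↦ ?_⟩, ⟨-a, by simpa using hmem, by simp [hone]⟩,
    ⟨a, hmem, by simp [hone]⟩⟩
  rw [p.mem_ball_zero]
  calc p (((a - t) / (2 * a)) ^ 2 • x + ((a + t) / (2 * a)) ^ 2 • y)
      ≤ p (((a - t) / (2 * a)) ^ 2 • x) + p (((a + t) / (2 * a)) ^ 2 • y) :=
        map_add_le_add p _ _
    _ = ‖((a - t) / (2 * a)) ^ 2‖ * p x + ‖((a + t) / (2 * a)) ^ 2‖ * p y := by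
        rw [map_smul_eq_mul, map_smul_eq_mul]
    _ ≤ ‖((a - t) / (2 * a)) ^ 2‖ * a ^ 2 + ‖((a + t) / (2 * a)) ^ 2‖ * a ^ 2 := by
        gcongr
        exacts [(le_max_left _ _).trans hρ.le, (le_max_right _ _).trans hρ.le]
    _ = (a ^ 2 + ‖t‖ ^ 2) / 2 := by
        rw [← add_mul, norm_sub_div_sq_add_norm_add_div_sq, hnorm]
        field_simp
    _ < 1 := by
        linarith [pow_lt_one₀ ha.le ha1 two_ne_zero,
          pow_lt_one₀ (norm_nonneg t) (mem_ball_zero_iff.mp ht) two_ne_zero]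

theorem analyticDiscConnected_ball : AnalyticDiscConnected (ball (0 : E) 1) := by
  simpa only [ball_normSeminorm] using analyticDiscConnected_seminorm_ball (normSeminorm ℂ E)

/-! ### The Lempert function -/

theorem lempert_nonneg (D : Set E) (z w : E) : 0 ≤ lempert D z w := by
  apply Real.sInf_nonneg
  rintro _ ⟨α, hα, -, rfl⟩
  exact artanh_nonneg ⟨norm_nonneg α, hα.le⟩

theorem lempert_le_artanh {φ : ℂ → E} (hφ : HolomorphicMapsTo (ball 0 1) D φ) {α : ℂ}
    (hα : ‖α‖ < 1) : lempert D (φ 0) (φ α) ≤ artanh ‖α‖ := by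
  refine csInf_le ⟨0, ?_⟩ ⟨α, hα, ⟨φ, hφ.differentiableOn, hφ.mapsTo, rfl, rfl⟩, rfl⟩
  rintro _ ⟨β, hβ, -, rfl⟩
  exact artanh_nonneg ⟨norm_nonneg β, hβ.le⟩

theorem AnalyticDiscConnected.le_lempert (hD : AnalyticDiscConnected D) {z w : E} (hz : z ∈ D)
    (hw : w ∈ D) {C : ℝ}
    (hC : ∀ φ : ℂ → E, HolomorphicMapsTo (ball 0 1) D φ → ∀ α : ℂ, ‖α‖ < 1 → φ 0 = z → φ α = w →
      C ≤ artanh ‖α‖) : C ≤ lempert D z w := by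
  obtain ⟨α, hα, φ, hφ, h0, h1⟩ := hD.exists_disc hz hw
  refine le_csInf ⟨_, α, hα, ⟨φ, hφ.differentiableOn, hφ.mapsTo, h0, h1⟩, rfl⟩ ?_
  rintro _ ⟨β, hβ, ⟨ψ, hψ, hψD, hψ0, hψ1⟩, rfl⟩
  exact hC ψ ⟨hψ, hψD⟩ β hβ hψ0 hψ1

theorem AnalyticDiscConnected.lempert_map_le (hD : AnalyticDiscConnected D) {f : E → F}
    (hf : HolomorphicMapsTo D D' f) {z w : E} (hz : z ∈ D) (hw : w ∈ D) :
    lempert D' (f z) (f w) ≤ lempert D z w := by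
  refine hD.le_lempert hz hw ?_
  rintro φ hφ α hα rfl rfl
  exact lempert_le_artanh (hf.comp hφ) hα

/-! ### The Kobayashi distance -/

theorem kobayashi_le_sum_lempert {c : ℕ → E} {m : ℕ} (hc : ∀ i ≤ m, c i ∈ D) :
    kobayashi D (c 0) (c m) ≤ ∑ i ∈ Finset.range m, lempert D (c i) (c (i + 1)) := by
  refine csInf_le ⟨0, ?_⟩ ⟨m, c, rfl, rfl, hc, rfl⟩
  rintro _ ⟨_, _, -, -, -, rfl⟩
  exact Finset.sum_nonneg fun _ _ ↦ lempert_nonneg D _ _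

theorem exists_chain {X : Type*} {S : Set X} {z w : X} (hz : z ∈ S) (hw : w ∈ S) :
    ∃ c : ℕ → X, c 0 = z ∧ c 1 = w ∧ ∀ i, c i ∈ S :=
  ⟨fun i ↦ if i = 0 then z else w, if_pos rfl, if_neg one_ne_zero, fun i ↦ by
    dsimp only
    split_ifs <;> assumption⟩

theorem kobayashi_le_lempert {z w : E} (hz : z ∈ D) (hw : w ∈ D) :
    kobayashi D z w ≤ lempert D z w := by
  obtain ⟨c, rfl, rfl, hc⟩ := exists_chain hz hw
  simpa using kobayashi_le_sum_lempert (m := 1) fun i _ ↦ hc i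

theorem kobayashi_zero_apply_le_artanh {φ : ℂ → E} (hφ : HolomorphicMapsTo (ball 0 1) D φ) {α : ℂ}
    (hα : ‖α‖ < 1) : kobayashi D (φ 0) (φ α) ≤ artanh ‖α‖ :=
  (kobayashi_le_lempert (hφ.mapsTo (mem_ball_self one_pos))
    (hφ.mapsTo (mem_ball_zero_iff.mpr hα))).trans (lempert_le_artanh hφ hα)

theorem kobayashi_apply_zero_le_artanh {φ : ℂ → E} (hφ : HolomorphicMapsTo (ball 0 1) D φ) {α : ℂ}
    (hα : ‖α‖ < 1) : kobayashi D (φ α) (φ 0) ≤ artanh ‖α‖ := by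
  simpa only [Function.comp_apply, discInvolution_zero, discInvolution_self] using
    kobayashi_zero_apply_le_artanh (hφ.comp (holomorphicMapsTo_discInvolution hα)) hα

theorem le_kobayashi {z w : E} (hz : z ∈ D) (hw : w ∈ D) {C : ℝ}
    (hC : ∀ (m : ℕ) (c : ℕ → E), c 0 = z → c m = w → (∀ i ≤ m, c i ∈ D) →
      C ≤ ∑ i ∈ Finset.range m, lempert D (c i) (c (i + 1))) : C ≤ kobayashi D z w := by
  obtain ⟨c, hc0, hc1, hc⟩ := exists_chain hz hw
  refine le_csInf ⟨_, 1, c, hc0, hc1, fun i _ ↦ hc i, rfl⟩ ?_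
  rintro _ ⟨m, c, h0, hm, hcD, rfl⟩
  exact hC m c h0 hm hcD

theorem AnalyticDiscConnected.kobayashi_map_le (hD : AnalyticDiscConnected D) {f : E → F}
    (hf : HolomorphicMapsTo D D' f) {z w : E} (hz : z ∈ D) (hw : w ∈ D) :
    kobayashi D' (f z) (f w) ≤ kobayashi D z w := by
  refine le_kobayashi hz hw ?_
  rintro m c rfl rfl hc
  refine (kobayashi_le_sum_lempert (c := f ∘ c) fun i hi ↦ hf.mapsTo (hc i hi)).trans ?_
  refine Finset.sum_le_sum fun i hi ↦ ?_
  have hi := Finset.mem_range.mp hi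
  exact hD.lempert_map_le hf (hc i hi.le) (hc (i + 1) hi)

theorem AnalyticDiscConnected.kobayashi_map_eq_of_leftInvOn (hD' : AnalyticDiscConnected D')
    {ι : E → F} {π : F → E} (hι : HolomorphicMapsTo D D' ι) (hπ : HolomorphicMapsTo D' D π)
    (hπι : LeftInvOn π ι D) {z w : E} (hz : z ∈ D) (hw : w ∈ D) :
    kobayashi D' (ι z) (ι w) = kobayashi D z w := by
  have hD : AnalyticDiscConnected D := hD'.of_surjOn hπ (hπι.surjOn hι.mapsTo)
  refine le_antisymm (hD.kobayashi_map_le hι hz hw) ?_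
  simpa only [hπι hz, hπι hw] using
    hD'.kobayashi_map_le hπ (hι.mapsTo hz) (hι.mapsTo hw)

theorem sub_le_kobayashi {u : E → ℝ}
    (hu : ∀ z ∈ D, ∀ w ∈ D, u w - u z ≤ lempert D z w) {z w : E} (hz : z ∈ D) (hw : w ∈ D) :
    u w - u z ≤ kobayashi D z w := by
  refine le_kobayashi hz hw ?_
  rintro m c rfl rfl hc
  rw [← Finset.sum_range_sub (fun i ↦ u (c i))]
  refine Finset.sum_le_sum fun i hi ↦ ?_
  have hi := Finset.mem_range.mp hi
  exact hu _ (hc i hi.le) _ (hc (i + 1) hi)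

theorem AnalyticDiscConnected.half_log_re_sub_half_log_re_le_kobayashi
    (hD : AnalyticDiscConnected D) {g : E → ℂ} (hg : HolomorphicMapsTo D {z | 0 < z.re} g) {z w : E}
    (hz : z ∈ D) (hw : w ∈ D) :
    Real.log (g w).re / 2 - Real.log (g z).re / 2 ≤ kobayashi D z w := by
  refine sub_le_kobayashi (u := fun z ↦ Real.log (g z).re / 2) (fun z hz w hw ↦ ?_) hz hw
  refine hD.le_lempert hz hw ?_
  rintro φ hφ α hα rfl rfl
  exact half_log_re_sub_half_log_re_zero_le_artanh (hg.comp hφ) hα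

theorem AnalyticDiscConnected.artanh_sub_artanh_le_kobayashi (hD : AnalyticDiscConnected D)
    {f : E → ℂ} (hf : HolomorphicMapsTo D (ball 0 1) f) {z w : E} (hz : z ∈ D) (hw : w ∈ D)
    {a b : ℝ} (ha : f z = a) (hb : f w = b) : artanh b - artanh a ≤ kobayashi D z w := by
  simpa only [Function.comp_apply, ha, hb, half_log_cayley_re_ofReal] using
    hD.half_log_re_sub_half_log_re_le_kobayashi (holomorphicMapsTo_cayley.comp hf) hz hw

theorem GromovHyperbolicWith.of_holomorphic_retract (h : GromovHyperbolicWith D' (kobayashi D'))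
    (hD' : AnalyticDiscConnected D') {ι : E → F} {π : F → E} (hι : HolomorphicMapsTo D D' ι)
    (hπ : HolomorphicMapsTo D' D π) (hπι : LeftInvOn π ι D) :
    GromovHyperbolicWith D (kobayashi D) :=
  h.of_isometry hι.mapsTo fun _ hz _ hw ↦ hD'.kobayashi_map_eq_of_leftInvOn hι hπ hπι hz hw

end Kobayashi

/-! ### The bidisc -/

/-- The unit bidisc in `ℂ²`. -/
def bidisc : Set (ℂ × ℂ) := ball 0 1 ×ˢ ball 0 1

theorem analyticDiscConnected_bidisc : AnalyticDiscConnected bidisc := by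
  rw [bidisc, ball_prod_same]
  exact analyticDiscConnected_ball

theorem not_gromovHyperbolicWith_kobayashi_bidisc :
    ¬ GromovHyperbolicWith bidisc (kobayashi bidisc) := by
  refine not_gromovHyperbolicWith_of_squares fun T hT ↦ ?_
  obtain ⟨r, hr0, hr1, hrT⟩ := exists_artanh_eq hT.le
  have hnorm : ‖(r : ℂ)‖ = r := Complex.norm_of_nonneg hr0
  have hr : ‖(r : ℂ)‖ < 1 := hnorm.trans_lt hr1
  have hzero_mem : (0 : ℂ) ∈ ball 0 1 := mem_ball_self one_pos
  have hmem : (r : ℂ) ∈ ball 0 1 := mem_ball_zero_iff.mpr hr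
  have hneg_mem : (-r : ℂ) ∈ ball 0 1 := by rwa [mem_ball_zero_iff, norm_neg]
  have hid := HolomorphicMapsTo.id (ball (0 : ℂ) 1)
  have hconst := HolomorphicMapsTo.const (ball (0 : ℂ) 1) hmem
  have hfst : HolomorphicMapsTo bidisc _ _ := .fst (ball (0 : ℂ) 1) (ball (0 : ℂ) 1)
  have hsnd : HolomorphicMapsTo bidisc _ _ := .snd (ball (0 : ℂ) 1) (ball (0 : ℂ) 1)
  refine ⟨(r, r), ⟨hmem, hmem⟩, (-r, r), ⟨hneg_mem, hmem⟩, (0, r), ⟨hzero_mem, hmem⟩,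
    (0, 0), ⟨hzero_mem, hzero_mem⟩, ?_, ?_, ?_, ?_, ?_, ?_, ?_⟩
  · simpa only [bidisc, hnorm, hrT] using kobayashi_apply_zero_le_artanh (hid.prodMk hconst) hr
  · simpa only [bidisc, hnorm, hrT, neg_zero] using
      kobayashi_zero_apply_le_artanh (hid.neg.prodMk hconst) hr
  · simpa only [bidisc, hnorm, hrT] using kobayashi_apply_zero_le_artanh (hid.prodMk hid) hr
  · simpa only [bidisc, hnorm, hrT, neg_zero] using
      kobayashi_zero_apply_le_artanh (hid.neg.prodMk hid) hr
  · have := analyticDiscConnected_bidisc.artanh_sub_artanh_le_kobayashi hsnd (z := (0, 0))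
      (w := (0, r)) ⟨hzero_mem, hzero_mem⟩ ⟨hzero_mem, hmem⟩ Complex.ofReal_zero.symm rfl
    simpa only [artanh_zero, hrT, sub_zero] using this
  · have := analyticDiscConnected_bidisc.artanh_sub_artanh_le_kobayashi hsnd.neg (z := (0, r))
      (w := (0, 0)) (a := -r) (b := 0) ⟨hzero_mem, hmem⟩ ⟨hzero_mem, hzero_mem⟩ (by simp) (by simp)
    simpa only [artanh_zero, artanh_neg, hrT, zero_sub, neg_neg] using this
  · have := analyticDiscConnected_bidisc.artanh_sub_artanh_le_kobayashi hfst.neg (z := (r, r))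
      (w := (-r, r)) (a := -r) (b := r) ⟨hmem, hmem⟩ ⟨hneg_mem, hmem⟩ (by simp) (by simp)
    simpa only [artanh_neg, hrT, sub_neg_eq_add, ← two_mul] using this

/-! ### The tetrablock -/

theorem norm_apply_le_norm_toEuclideanCLM {𝕜 n : Type*} [RCLike 𝕜] [Fintype n] [DecidableEq n]
    (A : Matrix n n 𝕜) (i j : n) : ‖A i j‖ ≤ ‖Matrix.toEuclideanCLM (n := n) (𝕜 := 𝕜) A‖ := by
  set L := Matrix.toEuclideanCLM (n := n) (𝕜 := 𝕜) A with hL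
  have hentry : L (EuclideanSpace.single j 1) i = A i j := by
    rw [hL, Matrix.ofLp_toEuclideanCLM]
    simp
  calc ‖A i j‖ ≤ ‖L (EuclideanSpace.single j 1)‖ := hentry ▸ PiLp.norm_apply_le _ i
    _ ≤ ‖L‖ := by simpa using L.le_opNorm (EuclideanSpace.single j 1)

/-- The symmetric `2 × 2` matrix as a linear function of its entries `(z₁₁, z₂₂, z)`. -/
def symmetricMatrix : ℂ × ℂ × ℂ →ₗ[ℂ] Matrix (Fin 2) (Fin 2) ℂ where
  toFun v := !![v.1, v.2.2; v.2.2, v.2.1]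
  map_add' v w := by ext i j; fin_cases i <;> fin_cases j <;> rfl
  map_smul' c v := by ext i j; fin_cases i <;> fin_cases j <;> rfl

/-- The operator norm of a symmetric `2 × 2` matrix, as a seminorm of its entries
`(z₁₁, z₂₂, z)`. -/
noncomputable def symmetricMatrixNorm : Seminorm ℂ (ℂ × ℂ × ℂ) :=
  (normSeminorm ℂ _).comp
    ((Matrix.toEuclideanCLM (n := Fin 2) (𝕜 := ℂ)).toAlgEquiv.toLinearMap ∘ₗ symmetricMatrix)

/-- The map `(z₁₁, z₂₂, z) ↦ (z₁₁, z₂₂, z₁₁ z₂₂ − z²)` in the definition of the tetrablock. -/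
noncomputable def tetrablockMap (v : ℂ × ℂ × ℂ) : EuclideanSpace ℂ (Fin 3) :=
  !₂[v.1, v.2.1, v.1 * v.2.1 - v.2.2 ^ 2]

theorem image_tetrablockMap : tetrablockMap '' symmetricMatrixNorm.ball 0 1 = tetrablock := by
  ext w
  constructor
  · rintro ⟨v, hv, rfl⟩
    exact ⟨v.1, v.2.1, v.2.2, symmetricMatrixNorm.mem_ball_zero.mp hv, rfl, rfl, rfl⟩
  · rintro ⟨z₁₁, z₂₂, z, hz, h₀, h₁, h₂⟩
    refine ⟨(z₁₁, z₂₂, z), symmetricMatrixNorm.mem_ball_zero.mpr hz, ?_⟩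
    ext i
    fin_cases i
    exacts [h₀.symm, h₁.symm, h₂.symm]

theorem differentiable_tetrablockMap : Differentiable ℂ tetrablockMap := by
  rw [differentiable_euclidean]
  intro i
  fin_cases i
  exacts [differentiable_fst, differentiable_snd.fst,
    show Differentiable ℂ fun v : ℂ × ℂ × ℂ ↦ v.1 * v.2.1 - v.2.2 ^ 2 by fun_prop]

theorem analyticDiscConnected_tetrablock : AnalyticDiscConnected tetrablock :=
  (analyticDiscConnected_seminorm_ball symmetricMatrixNorm).of_surjOn
    ⟨differentiable_tetrablockMap.differentiableOn, mapsTo_iff_image_subset.mpr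
      image_tetrablockMap.subset⟩ image_tetrablockMap.superset

open scoped Matrix.Norms.L2Operator in
theorem symmetricMatrixNorm_diagonal (a b : ℂ) :
    symmetricMatrixNorm (a, b, 0) = max ‖a‖ ‖b‖ := by
  have hdiag : symmetricMatrix (a, b, 0) = Matrix.diagonal ![a, b] :=
    (Matrix.diagonal_fin_two ![a, b]).symm
  calc symmetricMatrixNorm (a, b, 0) = ‖symmetricMatrix (a, b, 0)‖ := rfl
    _ = ‖![a, b]‖ := by rw [hdiag, Matrix.l2_opNorm_diagonal]
    _ = max ‖a‖ ‖b‖ := by simp [Pi.norm_def, Fin.univ_succ]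

theorem holomorphicMapsTo_bidisc_tetrablock :
    HolomorphicMapsTo bidisc tetrablock fun v ↦ tetrablockMap (v.1, v.2, 0) where
  differentiableOn := (differentiable_tetrablockMap.comp (by fun_prop)).differentiableOn
  mapsTo v hv := image_tetrablockMap.subset <| mem_image_of_mem _ <| by
    rw [symmetricMatrixNorm.mem_ball_zero, symmetricMatrixNorm_diagonal]
    exact max_lt (mem_ball_zero_iff.mp hv.1) (mem_ball_zero_iff.mp hv.2)

theorem holomorphicMapsTo_tetrablock_bidisc :
    HolomorphicMapsTo tetrablock bidisc fun w ↦ (w 0, w 1) where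
  differentiableOn := by fun_prop
  mapsTo := by
    rintro w ⟨z₁₁, z₂₂, z, hz, h₀, h₁, -⟩
    have hentry (i : Fin 2) : ‖!![z₁₁, z; z, z₂₂] i i‖ < 1 :=
      (norm_apply_le_norm_toEuclideanCLM _ i i).trans_lt hz
    rw [← h₀, ← h₁] at hentry
    exact ⟨mem_ball_zero_iff.mpr (hentry 0), mem_ball_zero_iff.mpr (hentry 1)⟩

/-- **Proposition 4.** The tetrablock `𝔼` is not Gromov hyperbolic with respect to
its Kobayashi distance. -/
theorem tetrablock_not_gromov_kobayashi_hyperbolic :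
    ¬ GromovHyperbolicWith tetrablock (kobayashi tetrablock) := fun h ↦
  not_gromovHyperbolicWith_kobayashi_bidisc <|
    h.of_holomorphic_retract analyticDiscConnected_tetrablock holomorphicMapsTo_bidisc_tetrablock
      holomorphicMapsTo_tetrablock_bidisc fun _ _ ↦ rfl
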